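/- Let M = (X, I) be a matroid on |X| = n elements and let k be an integer with 1 ≤ k < rk(M). Then I(k)² = (1 + 1/k)·(1 + 1/(n − k))·I(k−1)·I(k+1) if and only if every subset of X of size k+1 is independent (equivalently, girth(M) > k+1). -/

import Mathlib

open scoped Classical BigOperators

noncomputable section

variable {X : Type*} [Fintype X] [DecidableEq X]

/-- The number of independent sets of size `k` of the set system `Indep`. -/
def numIndep (Indep : Finset X → Prop) (k : ℕ) : ℕ :=
  (Finset.univ.filter (fun S : Finset X => Indep S ∧ S.card = k)).card

/-- The weighted count of independent sets of size `k`: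
`I_ω(k) = Σ_{S ∈ I, |S| = k} Π_{x ∈ S} ω(x)`. -/
def wNumIndep (Indep : Finset X → Prop) (ω : X → ℝ) (k : ℕ) : ℝ :=
  ∑ S ∈ Finset.univ.filter (fun S : Finset X => Indep S ∧ S.card = k), ∏ x ∈ S, ω x

/-- The rank of a matroid: the maximal size of an independent set. -/
def matroidRk (Indep : Finset X → Prop) : ℕ :=
  Finset.univ.sup (fun S : Finset X => if Indep S then S.card else 0)

/-- The set of continuations of an independent set `S`. -/
def mCont (Indep : Finset X → Prop) (S : Finset X) : Finset X :=
  Finset.univ.filter (fun x => x ∉ S ∧ Indep (insert x S))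

/-- The parallel class of `x ∈ Cnt(S)`:  the set of continuations `y` with `y ∼_S x`,
i.e. `y = x` or `S ∪ {x,y}` is not independent. -/
def mParClass (Indep : Finset X → Prop) (S : Finset X) (x : X) : Finset X :=
  (mCont Indep S).filter (fun y => y = x ∨ ¬ Indep (insert y (insert x S)))

/-- The set `Par(S)` of parallel classes of `S`. -/
def mParClasses (Indep : Finset X → Prop) (S : Finset X) : Finset (Finset X) :=
  (mCont Indep S).image (mParClass Indep S)

/-- The `k`-continuation number `p(k)`: the maximal number of parallel classes of an
independent set of size `k`. -/
def contNum (Indep : Finset X → Prop) (k : ℕ) : ℕ :=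
  (Finset.univ.filter (fun S : Finset X => Indep S ∧ S.card = k)).sup
    (fun S => (mParClasses Indep S).card)

/-! Let `n` be the size of the ground set and `I(j)` the number of independent `j`-sets. Homogenize
the independence polynomial of the matroid to `∑ x₀ ^ (n - |I|) * ∏ i ∈ I, xᵢ`. The Hessian of its
derivative along an independent set `T` records the partition of the elements extending `T` into
parallel classes, and is Lorentzian because there are at most `n - |T|` classes. A spectral argument
transfers this from the partial derivatives of the polynomial to its directional derivatives along
nonnegative vectors. If `D` is the derivative along the sum of all `xᵢ` other than `x₀`, the Hessian
of the `D ^ (k - 1)`-derivative, restricted to the plane spanned by `x₀` and that sum, is a `2 × 2`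
matrix of the numbers `j! (n - j)! I(j)` with `k - 1 ≤ j ≤ k + 1`. Equality means that this matrix
is singular, so the whole Hessian has a kernel vector with nonzero `x₀`-entry. Such a vector is also
in the kernel of the Hessian of every independent `(k - 1)`-set, where it forces all elements
outside the set to extend it and all parallel classes to be singletons; every set of size `k + 1` is
then reached by exchanging elements. -/

section Hyperbolic

open Matrix

variable {Y : Type*} [Fintype Y] {A : Matrix Y Y ℝ} {v : Y → ℝ}

/-- The reversed Cauchy–Schwarz inequality for the form `u ↦ u ⬝ᵥ A *ᵥ u` against a fixed vector
`v`. When `v ⬝ᵥ A *ᵥ v > 0` it says that the form is of Lorentzian signature. -/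
def IsHyperbolicAt (A : Matrix Y Y ℝ) (v : Y → ℝ) : Prop :=
  ∀ u : Y → ℝ, (u ⬝ᵥ A *ᵥ u) * (v ⬝ᵥ A *ᵥ v) ≤ (u ⬝ᵥ A *ᵥ v) ^ 2

theorem dotProduct_mulVec_comm_of_isSymm {R : Type*} [CommSemiring R] {A : Matrix Y Y R}
    (hA : A.IsSymm) (u v : Y → R) :
    u ⬝ᵥ A *ᵥ v = v ⬝ᵥ A *ᵥ u := by
  rw [dotProduct_mulVec, ← mulVec_transpose, hA.eq, dotProduct_comm]

theorem dotProduct_mulVec_self_add_smul {R : Type*} [CommSemiring R] {A : Matrix Y Y R}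
    (hA : A.IsSymm) (u v : Y → R) (r : R) :
    (u + r • v) ⬝ᵥ A *ᵥ (u + r • v) =
      u ⬝ᵥ A *ᵥ u + 2 * r * (u ⬝ᵥ A *ᵥ v) + r ^ 2 * (v ⬝ᵥ A *ᵥ v) := by
  simp only [mulVec_add, mulVec_smul, dotProduct_add, add_dotProduct, dotProduct_smul,
    smul_dotProduct, smul_eq_mul, dotProduct_mulVec_comm_of_isSymm hA v u]
  ring

theorem dotProduct_mulVec_nonneg (hA : ∀ i j, 0 ≤ A i j) (hv : ∀ i, 0 ≤ v i) :
    0 ≤ v ⬝ᵥ A *ᵥ v :=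
  dotProduct_nonneg_of_nonneg hv fun i => dotProduct_nonneg_of_nonneg (hA i) hv

namespace IsHyperbolicAt

theorem of_forall_exists_nonpos (hA : A.IsSymm) (hv : 0 ≤ v ⬝ᵥ A *ᵥ v)
    (h : ∀ u : Y → ℝ, ∃ r : ℝ, (u + r • v) ⬝ᵥ A *ᵥ (u + r • v) ≤ 0) : IsHyperbolicAt A v := by
  intro u
  obtain ⟨r, hr⟩ := h u
  rw [dotProduct_mulVec_self_add_smul hA] at hr
  nlinarith [sq_nonneg (u ⬝ᵥ A *ᵥ v + r * (v ⬝ᵥ A *ᵥ v)), mul_le_mul_of_nonneg_right hr hv]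

theorem of_nonpos_of_orthogonal (hA : A.IsSymm) (hv : 0 ≤ v ⬝ᵥ A *ᵥ v)
    (h : ∀ u : Y → ℝ, u ⬝ᵥ A *ᵥ v = 0 → u ⬝ᵥ A *ᵥ u ≤ 0) : IsHyperbolicAt A v := by
  rcases hv.eq_or_lt with hv0 | hvpos
  · intro u
    rw [← hv0, mul_zero]
    exact sq_nonneg _
  · refine of_forall_exists_nonpos hA hv fun u =>
      ⟨-(u ⬝ᵥ A *ᵥ v) / (v ⬝ᵥ A *ᵥ v), h _ ?_⟩
    rw [add_dotProduct, smul_dotProduct, smul_eq_mul, div_mul_cancel₀ _ hvpos.ne', add_neg_cancel]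

theorem mulVec_eq_zero (hH : IsHyperbolicAt A v) (hA : A.IsSymm) (hv : 0 < v ⬝ᵥ A *ᵥ v)
    {u : Y → ℝ} (huu : u ⬝ᵥ A *ᵥ u = 0) (huv : u ⬝ᵥ A *ᵥ v = 0) : A *ᵥ u = 0 := by
  refine dotProduct_eq_zero _ fun z => ?_
  rw [dotProduct_comm, dotProduct_mulVec_comm_of_isSymm hA]
  -- A quadratic in `t` without constant term that is nonnegative everywhere has no linear term.
  have hline : ∀ t : ℝ, 0 ≤
      ((z ⬝ᵥ A *ᵥ v) ^ 2 - (z ⬝ᵥ A *ᵥ z) * (v ⬝ᵥ A *ᵥ v)) * (t * t) +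
        (-(2 * (u ⬝ᵥ A *ᵥ z) * (v ⬝ᵥ A *ᵥ v))) * t + 0 := by
    intro t
    have := hH (u + t • z)
    rw [dotProduct_mulVec_self_add_smul hA, add_dotProduct, smul_dotProduct, smul_eq_mul,
      huu, huv] at this
    linarith
  have hdisc := discrim_le_zero hline
  rw [discrim, mul_zero, sub_zero, neg_sq] at hdisc
  have hzero := pow_eq_zero_iff two_ne_zero |>.1 (hdisc.antisymm (sq_nonneg _))
  simpa [hv.ne'] using hzero

theorem mulVec_eq_zero_of_sq_eq (hH : IsHyperbolicAt A v) (hA : A.IsSymm)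
    (hv : 0 < v ⬝ᵥ A *ᵥ v) {z : Y → ℝ}
    (hz : (z ⬝ᵥ A *ᵥ v) ^ 2 = (z ⬝ᵥ A *ᵥ z) * (v ⬝ᵥ A *ᵥ v)) :
    A *ᵥ (z - ((z ⬝ᵥ A *ᵥ v) / (v ⬝ᵥ A *ᵥ v)) • v) = 0 := by
  rw [sub_eq_add_neg, ← neg_smul]
  refine hH.mulVec_eq_zero hA hv ?_ ?_
  · rw [dotProduct_mulVec_self_add_smul hA]
    field_simp
    linarith
  · rw [add_dotProduct, smul_dotProduct, smul_eq_mul]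
    field_simp
    ring

theorem isClosed_setOf {Z : Type*} [TopologicalSpace Z] {A : Z → Matrix Y Y ℝ} {v : Z → Y → ℝ}
    (hA : Continuous A) (hv : Continuous v) : IsClosed {z | IsHyperbolicAt (A z) (v z)} := by
  simp only [IsHyperbolicAt, Set.ofPred_forall]
  exact isClosed_iInter fun u => isClosed_le (by fun_prop) (by fun_prop)

end IsHyperbolicAt

theorem dotProduct_mulVec_nonpos_of_orthogonal (hA : A.IsSymm) {u : Y → ℝ}
    (hu : ∀ μ : ℝ, 0 < μ → ∀ b : Y → ℝ, A *ᵥ b = μ • b → b ⬝ᵥ u = 0) : u ⬝ᵥ A *ᵥ u ≤ 0 := by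
  have hH : A.IsHermitian := by rwa [IsHermitian, conjTranspose_eq_transpose_of_trivial]
  let b : Y → Y → ℝ := fun l => hH.eigenvectorBasis l
  have heig : ∀ l, A *ᵥ b l = hH.eigenvalues l • b l := hH.mulVec_eigenvectorBasis
  have hparseval := hH.eigenvectorBasis.sum_inner_mul_inner (WithLp.toLp 2 u)
    (WithLp.toLp 2 (A *ᵥ u))
  simp only [EuclideanSpace.inner_eq_star_dotProduct, star_trivial] at hparseval
  rw [dotProduct_comm, ← hparseval]
  refine Finset.sum_nonpos fun l _ => ?_
  change (b l ⬝ᵥ u) * (A *ᵥ u ⬝ᵥ b l) ≤ 0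
  rw [dotProduct_comm (A *ᵥ u), dotProduct_mulVec_comm_of_isSymm hA, heig, dotProduct_smul,
    smul_eq_mul, dotProduct_comm u]
  rcases le_or_gt (hH.eigenvalues l) 0 with hle | hpos
  · nlinarith [sq_nonneg (b l ⬝ᵥ u)]
  · simp [hu _ hpos _ (heig l)]

theorem dotProduct_mulVec_nonpos_of_weighted_orthogonal (hA : A.IsSymm)
    {D : Y → ℝ} (hD : ∀ i, 0 < D i) {u : Y → ℝ}
    (hu : ∀ μ : ℝ, 0 < μ → ∀ b : Y → ℝ, A *ᵥ b = μ • (D * b) → b ⬝ᵥ (D * u) = 0) :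
    u ⬝ᵥ A *ᵥ u ≤ 0 := by
  let s : Y → ℝ := fun i => √(D i)
  have hs : ∀ i, s i ≠ 0 := fun i => (Real.sqrt_pos.2 (hD i)).ne'
  have hss : s * s = D := funext fun i => Real.mul_self_sqrt (hD i).le
  have hinv : s⁻¹ * s = 1 := funext fun i => inv_mul_cancel₀ (hs i)
  let M : Matrix Y Y ℝ := diagonal s⁻¹ * A * diagonal s⁻¹
  have hMsymm : M.IsSymm := by
    simp only [M, IsSymm, transpose_mul, diagonal_transpose, hA.eq, Matrix.mul_assoc]
  have hM : ∀ p : Y → ℝ, M *ᵥ p = s⁻¹ * (A *ᵥ (s⁻¹ * p)) := by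
    intro p
    have hdiag : ∀ q : Y → ℝ, diagonal s⁻¹ *ᵥ q = s⁻¹ * q :=
      fun q => funext fun i => mulVec_diagonal _ _ i
    simp only [M, ← mulVec_mulVec, hdiag]
  have hdot : ∀ p q r : Y → ℝ, (p * q) ⬝ᵥ r = p ⬝ᵥ (q * r) := fun p q r =>
    Finset.sum_congr rfl fun i _ => mul_assoc _ _ _
  have hnonpos : (s * u) ⬝ᵥ M *ᵥ (s * u) ≤ 0 := by
    refine dotProduct_mulVec_nonpos_of_orthogonal hMsymm fun μ hμ p hp => ?_
    have hb : A *ᵥ (s⁻¹ * p) = μ • (D * (s⁻¹ * p)) := by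
      calc A *ᵥ (s⁻¹ * p) = s * M *ᵥ p := by rw [hM, ← mul_assoc, mul_comm s, hinv, one_mul]
        _ = μ • (s * (s⁻¹ * s) * p) := by rw [hp, hinv, mul_one, mul_smul_comm]
        _ = μ • (D * (s⁻¹ * p)) := by rw [← hss]; congr 1; ring
    have := hu μ hμ _ hb
    rwa [mul_comm s⁻¹, hdot, ← hss, mul_assoc s, ← mul_assoc, hinv, one_mul] at this
  rwa [hM, mul_comm s u, hdot, ← mul_assoc, mul_comm u, ← mul_assoc s⁻¹, hinv, one_mul,
    mul_comm s, hinv, one_mul] at hnonpos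

theorem sum_mul_sub_sq_eq {R : Type*} [CommRing R] {A : Matrix Y Y R} (hA : A.IsSymm)
    (v f : Y → R) :
    ∑ i, ∑ j, A i j * (v i * v j) * (f i - f j) ^ 2 =
      2 * (∑ i, v i * f i ^ 2 * (A *ᵥ v) i - (v * f) ⬝ᵥ A *ᵥ (v * f)) := by
  have hdiag : ∑ i, ∑ j, A i j * (v i * v j) * f i ^ 2 = ∑ i, v i * f i ^ 2 * (A *ᵥ v) i := by
    simp only [mulVec, dotProduct, Finset.mul_sum]
    exact Finset.sum_congr rfl fun i _ => Finset.sum_congr rfl fun j _ => by ring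
  have hdiag' : ∑ i, ∑ j, A i j * (v i * v j) * f j ^ 2 = ∑ i, v i * f i ^ 2 * (A *ᵥ v) i := by
    rw [Finset.sum_comm, ← hdiag]
    exact Finset.sum_congr rfl fun i _ => Finset.sum_congr rfl fun j _ => by
      rw [hA.apply]; ring
  have hcross : ∑ i, ∑ j, A i j * (v i * v j) * (f i * f j) = (v * f) ⬝ᵥ A *ᵥ (v * f) := by
    simp only [mulVec, dotProduct, Finset.mul_sum, Pi.mul_apply]
    exact Finset.sum_congr rfl fun i _ => Finset.sum_congr rfl fun j _ => by ring
  calc ∑ i, ∑ j, A i j * (v i * v j) * (f i - f j) ^ 2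
      = ∑ i, ∑ j, (A i j * (v i * v j) * f i ^ 2 + A i j * (v i * v j) * f j ^ 2
          - 2 * (A i j * (v i * v j) * (f i * f j))) :=
        Finset.sum_congr rfl fun i _ => Finset.sum_congr rfl fun j _ => by ring
    _ = _ := by
        simp only [Finset.sum_sub_distrib, Finset.sum_add_distrib, ← Finset.mul_sum, hdiag,
          hdiag', hcross]
        ring

section Bochner

variable {b : Y → ℝ} {μ : ℝ}

/-- The ratio of `A *ᵥ v` to `v`, the weight for which `v` is an eigenvector of `A` with eigenvalue
`1`. Where `A *ᵥ v` vanishes it is set to `1`, to keep the weight positive. -/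
def degreeWeight (A : Matrix Y Y ℝ) (v : Y → ℝ) : Y → ℝ :=
  fun i => if (A *ᵥ v) i = 0 then 1 else (A *ᵥ v) i / v i

theorem degreeWeight_pos (hA : ∀ i j, 0 ≤ A i j) (hv : ∀ i, 0 < v i) (i : Y) :
    0 < degreeWeight A v i := by
  have hAv : 0 ≤ (A *ᵥ v) i := dotProduct_nonneg_of_nonneg (hA i) fun j => (hv j).le
  unfold degreeWeight
  split_ifs with h
  · exact one_pos
  · exact div_pos (hAv.lt_of_ne' h) (hv i)

theorem mulVec_eq_degreeWeight_mul (hv : ∀ i, 0 < v i) {i : Y} (hi : (A *ᵥ v) i ≠ 0) :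
    (A *ᵥ v) i = degreeWeight A v i * v i := by
  rw [degreeWeight, if_neg hi, div_mul_cancel₀ _ (hv i).ne']

theorem row_eq_zero_of_mulVec_eq_zero (hA : ∀ i j, 0 ≤ A i j) (hv : ∀ i, 0 < v i) {i : Y}
    (hi : (A *ᵥ v) i = 0) (j : Y) : A i j = 0 := by
  have := (Finset.sum_eq_zero_iff_of_nonneg fun j _ => mul_nonneg (hA i j) (hv j).le).1 hi j
    (Finset.mem_univ j)
  exact (mul_eq_zero.1 this).resolve_right (hv j).ne'

theorem eigenvector_eq_zero_of_mulVec_eq_zero (hA : ∀ i j, 0 ≤ A i j) (hv : ∀ i, 0 < v i)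
    (hμ : 0 < μ) (hb : A *ᵥ b = μ • (degreeWeight A v * b)) {i : Y} (hi : (A *ᵥ v) i = 0) :
    b i = 0 := by
  have hrow : (A *ᵥ b) i = 0 := Finset.sum_eq_zero fun j _ => by
    simp only [row_eq_zero_of_mulVec_eq_zero hA hv hi, zero_mul]
  simpa [hrow, hμ.ne', (degreeWeight_pos hA hv i).ne'] using (congrFun hb i).symm

theorem one_le_of_le_sum_sq_div (hA : ∀ i j, 0 ≤ A i j) (hv : ∀ i, 0 < v i)
    (hle : ∀ u : Y → ℝ, u ⬝ᵥ A *ᵥ u ≤ ∑ y, v y * ((A *ᵥ u) y ^ 2 / (A *ᵥ v) y))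
    (hμ : 0 < μ) (hb : A *ᵥ b = μ • (degreeWeight A v * b)) (hb0 : b ≠ 0) : 1 ≤ μ := by
  set E := ∑ i, degreeWeight A v i * b i ^ 2 with hE
  have hEpos : 0 < E := by
    obtain ⟨i, hi⟩ := Function.ne_iff.1 hb0
    exact Finset.sum_pos' (fun j _ => mul_nonneg (degreeWeight_pos hA hv j).le (sq_nonneg _))
      ⟨i, Finset.mem_univ i, mul_pos (degreeWeight_pos hA hv i) (sq_pos_of_ne_zero hi)⟩
  have hleft : b ⬝ᵥ A *ᵥ b = μ * E := by
    rw [hb, dotProduct_smul, smul_eq_mul, hE]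
    congr 1
    exact Finset.sum_congr rfl fun i _ => by simp only [Pi.mul_apply]; ring
  have hright : ∑ y, v y * ((A *ᵥ b) y ^ 2 / (A *ᵥ v) y) = μ ^ 2 * E := by
    rw [hE, Finset.mul_sum]
    refine Finset.sum_congr rfl fun y _ => ?_
    rcases eq_or_ne ((A *ᵥ v) y) 0 with hy | hy
    · simp [hy, eigenvector_eq_zero_of_mulVec_eq_zero hA hv hμ hb hy]
    · rw [mulVec_eq_degreeWeight_mul hv hy, hb]
      have := (hv y).ne'
      have := (degreeWeight_pos hA hv y).ne'
      simp only [Pi.smul_apply, Pi.mul_apply, smul_eq_mul]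
      field_simp
  have hμE : μ * E ≤ μ * (μ * E) := by
    linarith [hle b, hleft, hright]
  exact (le_mul_iff_one_le_left hEpos).1 (le_of_mul_le_mul_left hμE hμ)

theorem sum_mul_sub_sq_nonpos_of_one_le (hsymm : A.IsSymm) (hA : ∀ i j, 0 ≤ A i j)
    (hv : ∀ i, 0 < v i) (hμ : 1 ≤ μ) (hb : A *ᵥ b = μ • (degreeWeight A v * b)) :
    ∑ i, ∑ j, A i j * (v i * v j) * (b i / v i - b j / v j) ^ 2 ≤ 0 := by
  have hvb : v * (fun i => b i / v i) = b := funext fun i => mul_div_cancel₀ _ (hv i).ne'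
  rw [sum_mul_sub_sq_eq hsymm v (fun i => b i / v i), hvb]
  suffices ∑ i, v i * (b i / v i) ^ 2 * (A *ᵥ v) i ≤ b ⬝ᵥ A *ᵥ b by linarith
  refine Finset.sum_le_sum fun i _ => ?_
  rcases eq_or_ne ((A *ᵥ v) i) 0 with hi | hi
  · simp [eigenvector_eq_zero_of_mulVec_eq_zero hA hv (one_pos.trans_le hμ) hb hi]
  · rw [mulVec_eq_degreeWeight_mul hv hi, hb]
    calc v i * (b i / v i) ^ 2 * (degreeWeight A v i * v i)
        = 1 * (degreeWeight A v i * b i ^ 2) := by have := (hv i).ne'; field_simp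
      _ ≤ μ * (degreeWeight A v i * b i ^ 2) := by
        gcongr
        exact mul_nonneg (degreeWeight_pos hA hv i).le (sq_nonneg _)
      _ = b i * (μ • (degreeWeight A v * b)) i := by
        simp only [Pi.smul_apply, Pi.mul_apply, smul_eq_mul]; ring

theorem mul_sub_sq_eq_zero_of_one_le (hsymm : A.IsSymm) (hA : ∀ i j, 0 ≤ A i j)
    (hv : ∀ i, 0 < v i) (hμ : 1 ≤ μ) (hb : A *ᵥ b = μ • (degreeWeight A v * b)) (i j : Y) :
    A i j * (v i * v j) * (b i / v i - b j / v j) ^ 2 = 0 := by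
  have hterm : ∀ i j, 0 ≤ A i j * (v i * v j) * (b i / v i - b j / v j) ^ 2 := fun i j =>
    mul_nonneg (mul_nonneg (hA i j) (mul_pos (hv i) (hv j)).le) (sq_nonneg _)
  have hrow : ∀ i, 0 ≤ ∑ j, A i j * (v i * v j) * (b i / v i - b j / v j) ^ 2 := fun i =>
    Finset.sum_nonneg fun j _ => hterm i j
  have hsum := (sum_mul_sub_sq_nonpos_of_one_le hsymm hA hv hμ hb).antisymm
    (Finset.sum_nonneg fun i _ => hrow i)
  have hi := (Finset.sum_eq_zero_iff_of_nonneg fun i _ => hrow i).1 hsum i (Finset.mem_univ i)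
  exact (Finset.sum_eq_zero_iff_of_nonneg fun j _ => hterm i j).1 hi j (Finset.mem_univ j)

theorem exists_degreeWeight_mul_eq_smul (hsymm : A.IsSymm) (hA : ∀ i j, 0 ≤ A i j)
    (hv : ∀ i, 0 < v i) {w : Y} (hw : ∀ i, 0 < (A *ᵥ v) i → 0 < A i w) (hμ : 1 ≤ μ)
    (hb : A *ᵥ b = μ • (degreeWeight A v * b)) :
    ∃ c : ℝ, degreeWeight A v * b = c • (A *ᵥ v) := by
  refine ⟨b w / v w, funext fun i => ?_⟩
  simp only [Pi.mul_apply, Pi.smul_apply, smul_eq_mul]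
  rcases eq_or_ne ((A *ᵥ v) i) 0 with hi | hi
  · rw [eigenvector_eq_zero_of_mulVec_eq_zero hA hv (one_pos.trans_le hμ) hb hi, hi, mul_zero,
      mul_zero]
  · have hiw := hw i ((dotProduct_nonneg_of_nonneg (hA i) fun j => (hv j).le).lt_of_ne' hi)
    have hratio := mul_sub_sq_eq_zero_of_one_le hsymm hA hv hμ hb i w
    rw [mul_eq_zero, or_iff_right (mul_pos hiw (mul_pos (hv i) (hv w))).ne',
      pow_eq_zero_iff two_ne_zero, sub_eq_zero] at hratio
    rw [mulVec_eq_degreeWeight_mul hv hi, ← hratio]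
    have := (hv i).ne'
    field_simp

-- The inequality confines the positive spectrum of `A` relative to `degreeWeight A v` to `[1, ∞)`,
-- while `v` is a Perron eigenvector with eigenvalue `1`, so that the positive part is a line.
theorem IsHyperbolicAt.of_le_sum_sq_div (hsymm : A.IsSymm) (hA : ∀ i j, 0 ≤ A i j)
    (hv : ∀ i, 0 < v i) {w : Y} (hw : ∀ i, 0 < (A *ᵥ v) i → 0 < A i w)
    (hle : ∀ u : Y → ℝ, u ⬝ᵥ A *ᵥ u ≤ ∑ y, v y * ((A *ᵥ u) y ^ 2 / (A *ᵥ v) y)) :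
    IsHyperbolicAt A v := by
  refine .of_nonpos_of_orthogonal hsymm (dotProduct_mulVec_nonneg hA fun i => (hv i).le)
    fun u hu => dotProduct_mulVec_nonpos_of_weighted_orthogonal hsymm (degreeWeight_pos hA hv)
      fun μ hμ b hb => ?_
  rcases eq_or_ne b 0 with rfl | hb0
  · exact zero_dotProduct _
  obtain ⟨c, hc⟩ := exists_degreeWeight_mul_eq_smul hsymm hA hv hw
    (one_le_of_le_sum_sq_div hA hv hle hμ hb hb0) hb
  calc b ⬝ᵥ (degreeWeight A v * u) = u ⬝ᵥ (degreeWeight A v * b) :=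
        Finset.sum_congr rfl fun i _ => by simp only [Pi.mul_apply]; ring
    _ = 0 := by rw [hc, dotProduct_smul, hu, smul_zero]

end Bochner

end Hyperbolic

section DirectionalDerivatives

open Matrix Multiset

variable {Y : Type*} {φ : Multiset Y → ℝ} {v : Y → ℝ} {w : Y}

/-- The Hessian at the origin of the partial derivative with respect to the variables listed in `s`
of a polynomial encoded by `φ`: the value at the origin of its partial derivative with respect to
the variables listed in a multiset `t` is `φ t`. -/
def hessian (φ : Multiset Y → ℝ) (s : Multiset Y) : Matrix Y Y ℝ :=
  Matrix.of fun i j => φ (i ::ₘ j ::ₘ s)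

theorem hessian_isSymm (φ : Multiset Y → ℝ) (s : Multiset Y) : (hessian φ s).IsSymm :=
  IsSymm.ext fun i j => congrArg φ (Multiset.cons_swap j i s)

/-- Nonnegative weights whose support is closed under passing to submultisets and is a cone with
apex `w`, that is, closed under adjoining copies of `w`. -/
structure IsConeWeight (w : Y) (φ : Multiset Y → ℝ) : Prop where
  nonneg : ∀ s, 0 ≤ φ s
  cons_eq_zero : ∀ y s, φ s = 0 → φ (y ::ₘ s) = 0
  cons_pos : ∀ s, 0 < φ s → 0 < φ (w ::ₘ s)

variable [Fintype Y]

/-- The directional derivative along `v` of the polynomial encoded, as for `hessian`, by its partial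
derivatives `φ` at the origin. -/
def dirDeriv (v : Y → ℝ) (φ : Multiset Y → ℝ) : Multiset Y → ℝ :=
  fun s => ∑ y, v y * φ (y ::ₘ s)

theorem hessian_mulVec_apply (φ : Multiset Y → ℝ) (s : Multiset Y) (v : Y → ℝ) (i : Y) :
    (hessian φ s *ᵥ v) i = dirDeriv v φ (i ::ₘ s) :=
  Finset.sum_congr rfl fun j _ =>
    (mul_comm _ _).trans (congrArg (v j * φ ·) (Multiset.cons_swap i j s))

theorem dotProduct_hessian_mulVec (φ : Multiset Y → ℝ) (s : Multiset Y) (u v : Y → ℝ) :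
    u ⬝ᵥ hessian φ s *ᵥ v = dirDeriv u (dirDeriv v φ) s :=
  Finset.sum_congr rfl fun i _ => by rw [hessian_mulVec_apply]

theorem dirDeriv_comm (u v : Y → ℝ) (φ : Multiset Y → ℝ) :
    dirDeriv u (dirDeriv v φ) = dirDeriv v (dirDeriv u φ) := by
  ext s
  rw [← dotProduct_hessian_mulVec, dotProduct_mulVec_comm_of_isSymm (hessian_isSymm φ s),
    dotProduct_hessian_mulVec]

theorem dotProduct_hessian_dirDeriv_mulVec (φ : Multiset Y → ℝ) (s : Multiset Y) (u v : Y → ℝ) :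
    u ⬝ᵥ hessian (dirDeriv v φ) s *ᵥ u = ∑ y, v y * (u ⬝ᵥ hessian φ (y ::ₘ s) *ᵥ u) := by
  simp only [dotProduct_hessian_mulVec]
  rw [dirDeriv_comm u v, dirDeriv_comm u v]
  rfl

theorem hessian_dirDeriv_mulVec_apply (φ : Multiset Y → ℝ) (s : Multiset Y) (u v : Y → ℝ) (y : Y) :
    (hessian (dirDeriv v φ) s *ᵥ u) y = u ⬝ᵥ hessian φ (y ::ₘ s) *ᵥ v := by
  rw [hessian_mulVec_apply, dotProduct_hessian_mulVec]

theorem continuous_iterate_dirDeriv (φ : Multiset Y → ℝ) (m : ℕ) (s : Multiset Y) :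
    Continuous fun v => (dirDeriv v)^[m] φ s := by
  induction m generalizing s with
  | zero => exact continuous_const
  | succ m ih =>
    simp only [Function.iterate_succ_apply', dirDeriv]
    exact continuous_finsetSum _ fun y _ => (continuous_apply y).mul (ih _)

theorem hessian_mulVec_eq_zero_of_dirDeriv (hv : ∀ y, 0 ≤ v y) {s : Multiset Y}
    (hyp : ∀ y, IsHyperbolicAt (hessian φ (y ::ₘ s)) v)
    (hpos : ∀ y, 0 < v y → hessian φ (y ::ₘ s) = 0 ∨ 0 < v ⬝ᵥ hessian φ (y ::ₘ s) *ᵥ v)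
    {u : Y → ℝ} (hu : hessian (dirDeriv v φ) s *ᵥ u = 0) {y : Y} (hy : 0 < v y) :
    hessian φ (y ::ₘ s) *ᵥ u = 0 := by
  have huv : ∀ z, u ⬝ᵥ hessian φ (z ::ₘ s) *ᵥ v = 0 := fun z => by
    rw [← hessian_dirDeriv_mulVec_apply, hu, Pi.zero_apply]
  have hterm : ∀ z, v z * (u ⬝ᵥ hessian φ (z ::ₘ s) *ᵥ u) ≤ 0 := by
    intro z
    rcases (hv z).eq_or_lt with hz | hz
    · rw [← hz, zero_mul]
    refine mul_nonpos_of_nonneg_of_nonpos hz.le ?_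
    rcases hpos z hz with h0 | h0
    · rw [h0, zero_mulVec, dotProduct_zero]
    · have := hyp z u
      rw [huv, sq, mul_zero] at this
      exact nonpos_of_mul_nonpos_left this h0
  have hsum : ∑ z, v z * (u ⬝ᵥ hessian φ (z ::ₘ s) *ᵥ u) = 0 := by
    rw [← dotProduct_hessian_dirDeriv_mulVec, hu, dotProduct_zero]
  have hyzero := (Finset.sum_eq_zero_iff_of_nonpos fun z _ => hterm z).1 hsum y (Finset.mem_univ y)
  rcases hpos y hy with h0 | h0
  · rw [h0, zero_mulVec]
  · exact (hyp y).mulVec_eq_zero (hessian_isSymm φ _) h0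
      ((mul_eq_zero.1 hyzero).resolve_left hy.ne') (huv y)

namespace IsConeWeight

theorem dirDeriv_pos (hφ : IsConeWeight w φ) (hv : ∀ y, 0 ≤ v y) {s : Multiset Y} {y : Y}
    (hy : 0 < v y) (hs : 0 < φ (y ::ₘ s)) : 0 < dirDeriv v φ s :=
  Finset.sum_pos' (fun z _ => mul_nonneg (hv z) (hφ.nonneg _))
    ⟨y, Finset.mem_univ y, mul_pos hy hs⟩

theorem iterate_dirDeriv_eq_zero (hφ : IsConeWeight w φ) (v : Y → ℝ) (m : ℕ) {s : Multiset Y}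
    (hs : φ s = 0) : (dirDeriv v)^[m] φ s = 0 := by
  induction m generalizing s with
  | zero => exact hs
  | succ m ih =>
    rw [Function.iterate_succ_apply']
    exact Finset.sum_eq_zero fun y _ => by rw [ih (hφ.cons_eq_zero y s hs), mul_zero]

theorem hessian_iterate_dirDeriv_eq_zero (hφ : IsConeWeight w φ) (v : Y → ℝ) (m : ℕ)
    {s : Multiset Y} (hs : φ s = 0) : hessian ((dirDeriv v)^[m] φ) s = 0 := by
  ext i j
  exact hφ.iterate_dirDeriv_eq_zero v m (hφ.cons_eq_zero i _ (hφ.cons_eq_zero j s hs))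

protected theorem dirDeriv (hφ : IsConeWeight w φ) (hv : ∀ y, 0 < v y) :
    IsConeWeight w (dirDeriv v φ) where
  nonneg s := Finset.sum_nonneg fun y _ => mul_nonneg (hv y).le (hφ.nonneg _)
  cons_eq_zero z s hs := by
    have hterm := (Finset.sum_eq_zero_iff_of_nonneg fun y _ =>
      mul_nonneg (hv y).le (hφ.nonneg (y ::ₘ s))).1 hs
    refine Finset.sum_eq_zero fun y hy => ?_
    have hy0 : φ (y ::ₘ s) = 0 := (mul_eq_zero.1 (hterm y hy)).resolve_left (hv y).ne'
    rw [Multiset.cons_swap, hφ.cons_eq_zero z _ hy0, mul_zero]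
  cons_pos s hs := by
    obtain ⟨y, -, hy⟩ := Finset.exists_lt_of_sum_lt (f := fun _ => (0 : ℝ))
      (Finset.sum_const_zero.trans_lt hs)
    refine hφ.dirDeriv_pos (fun z => (hv z).le) (hv y) ?_
    rw [Multiset.cons_swap]
    exact hφ.cons_pos _ (pos_of_mul_pos_right hy (hv y).le)

theorem iterate_dirDeriv (hφ : IsConeWeight w φ) (hv : ∀ y, 0 < v y) (m : ℕ) :
    IsConeWeight w ((dirDeriv v)^[m] φ) := by
  induction m with
  | zero => exact hφ
  | succ m ih => rw [Function.iterate_succ_apply']; exact ih.dirDeriv hv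

theorem hessian_dirDeriv_pos (hφ : IsConeWeight w φ) (hv : ∀ y, 0 < v y) {s : Multiset Y} {i : Y}
    (hi : 0 < (hessian (dirDeriv v φ) s *ᵥ v) i) : 0 < hessian (dirDeriv v φ) s i w := by
  have hφi : 0 < φ (i ::ₘ s) := by
    refine (hφ.nonneg _).lt_of_ne fun h0 => hi.ne' ?_
    rw [hessian_dirDeriv_mulVec_apply, dotProduct_hessian_mulVec]
    exact hφ.iterate_dirDeriv_eq_zero v 2 h0.symm
  refine hφ.dirDeriv_pos (fun y => (hv y).le) (hv w) (hφ.cons_pos _ ?_)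
  rw [Multiset.cons_swap]
  exact hφ.cons_pos _ hφi

theorem isHyperbolicAt_hessian_dirDeriv (hφ : IsConeWeight w φ) (hv : ∀ y, 0 < v y)
    {s : Multiset Y} (hyp : ∀ y, IsHyperbolicAt (hessian φ (y ::ₘ s)) v) :
    IsHyperbolicAt (hessian (dirDeriv v φ) s) v := by
  refine .of_le_sum_sq_div (hessian_isSymm _ s) (fun i j => (hφ.dirDeriv hv).nonneg _) hv
    (fun i => hφ.hessian_dirDeriv_pos hv) fun u => ?_
  rw [dotProduct_hessian_dirDeriv_mulVec]
  refine Finset.sum_le_sum fun y _ => mul_le_mul_of_nonneg_left ?_ (hv y).le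
  rw [hessian_dirDeriv_mulVec_apply, hessian_dirDeriv_mulVec_apply]
  rcases (hφ.nonneg (y ::ₘ s)).eq_or_lt with h0 | hpos
  · rw [show hessian φ (y ::ₘ s) = 0 from hφ.hessian_iterate_dirDeriv_eq_zero v 0 h0.symm]
    simp only [zero_mulVec, dotProduct_zero, zero_pow two_ne_zero, zero_div, le_refl]
  · rw [le_div_iff₀]
    · exact hyp y u
    · rw [dotProduct_hessian_mulVec]
      have hv0 : ∀ z, 0 ≤ v z := fun z => (hv z).le
      exact (hφ.dirDeriv hv).dirDeriv_pos hv0 (hv w)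
        (hφ.dirDeriv_pos hv0 (hv w) (hφ.cons_pos _ (hφ.cons_pos _ hpos)))

theorem isHyperbolicAt_hessian_iterate_dirDeriv_of_pos (hφ : IsConeWeight w φ) (hv : ∀ y, 0 < v y)
    (hyp : ∀ s, IsHyperbolicAt (hessian φ s) v) (m : ℕ) (s : Multiset Y) :
    IsHyperbolicAt (hessian ((dirDeriv v)^[m] φ) s) v := by
  induction m generalizing s with
  | zero => exact hyp s
  | succ m ih =>
    rw [Function.iterate_succ_apply']
    exact (hφ.iterate_dirDeriv hv m).isHyperbolicAt_hessian_dirDeriv hv fun y => ih _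

theorem isHyperbolicAt_hessian_iterate_dirDeriv (hφ : IsConeWeight w φ)
    (hyp : ∀ v : Y → ℝ, (∀ y, 0 < v y) → ∀ s, IsHyperbolicAt (hessian φ s) v)
    (hv : ∀ y, 0 ≤ v y) (m : ℕ) (s : Multiset Y) :
    IsHyperbolicAt (hessian ((dirDeriv v)^[m] φ) s) v := by
  have hclosed : IsClosed {v : Y → ℝ | IsHyperbolicAt (hessian ((dirDeriv v)^[m] φ) s) v} :=
    IsHyperbolicAt.isClosed_setOf
      (continuous_matrix fun i j => continuous_iterate_dirDeriv φ m _) continuous_id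
  have hmem : v ∈ closure (Set.univ.pi fun _ : Y => Set.Ioi (0 : ℝ)) := by
    rw [closure_pi_set]
    exact fun y _ => by rw [closure_Ioi]; exact hv y
  refine hclosed.closure_subset_iff.2 (fun v' hv' => ?_) hmem
  have hv'pos : ∀ y, 0 < v' y := fun y => hv' y (Set.mem_univ y)
  exact hφ.isHyperbolicAt_hessian_iterate_dirDeriv_of_pos hv'pos (hyp v' hv'pos) m s

theorem hessian_mulVec_eq_zero_of_iterate_dirDeriv (hφ : IsConeWeight w φ) (hv : ∀ y, 0 ≤ v y)
    (hyp : ∀ m s, IsHyperbolicAt (hessian ((dirDeriv v)^[m] φ) s) v) {N : ℕ}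
    (hpos : ∀ m s, 0 < φ s → card s + m ≤ N → 0 < (dirDeriv v)^[m] φ s) {u : Y → ℝ}
    {s : Multiset Y} (hs : ∀ y ∈ s, 0 < v y) {m : ℕ} (hm : card s + m + 2 ≤ N)
    (hu : hessian ((dirDeriv v)^[card s + m] φ) 0 *ᵥ u = 0) :
    hessian ((dirDeriv v)^[m] φ) s *ᵥ u = 0 := by
  induction s using Multiset.induction generalizing m with
  | empty => simpa using hu
  | cons y s ih =>
    rw [card_cons, add_right_comm, add_assoc] at hu
    rw [card_cons] at hm
    have hsucc := ih (fun z hz => hs z (mem_cons_of_mem hz)) (by omega) hu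
    rw [Function.iterate_succ_apply'] at hsucc
    refine hessian_mulVec_eq_zero_of_dirDeriv hv (fun z => hyp m _) (fun z _ => ?_) hsucc
      (hs y (mem_cons_self y s))
    rcases (hφ.nonneg (z ::ₘ s)).eq_or_lt with h0 | h0
    · exact .inl (hφ.hessian_iterate_dirDeriv_eq_zero v m h0.symm)
    · right
      rw [dotProduct_hessian_mulVec, ← Function.iterate_succ_apply' (dirDeriv v),
        ← Function.iterate_succ_apply' (dirDeriv v)]
      exact hpos (m + 2) _ h0 (by rw [card_cons]; omega)

end IsConeWeight

end DirectionalDerivatives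

section PartitionMatrix

open Matrix
open scoped Nat

variable {V Z : Type*} {C : Finset V} {cl : V → Z} {a b c : ℝ}

/-- The symmetric matrix on `Option V` with entry `a` at `(none, none)`, entries `b` between `none`
and the elements of `C`, and entries `c` between elements of `C` in different fibres of `cl`. -/
def partitionMatrix (C : Finset V) (cl : V → Z) (a b c : ℝ) : Matrix (Option V) (Option V) ℝ :=
  Matrix.of fun
    | none, none => a
    | none, some y => if y ∈ C then b else 0
    | some x, none => if x ∈ C then b else 0
    | some x, some y => if x ∈ C ∧ y ∈ C ∧ cl x ≠ cl y then c else 0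

theorem partitionMatrix_isSymm : (partitionMatrix C cl a b c).IsSymm := by
  refine IsSymm.ext fun i j => ?_
  cases i <;> cases j <;> simp only [partitionMatrix, of_apply]
  grind

theorem partitionMatrix_nonneg (ha : 0 ≤ a) (hb : 0 ≤ b) (hc : 0 ≤ c) (i j : Option V) :
    0 ≤ partitionMatrix C cl a b c i j := by
  cases i <;> cases j <;> simp only [partitionMatrix, of_apply] <;> first | assumption | split_ifs
  all_goals first | assumption | exact le_rfl

theorem sum_mul_fiber_sum (C : Finset V) (cl : V → Z) (f : V → ℝ) :
    ∑ x ∈ C, f x * ∑ y ∈ C with cl y = cl x, f y =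
      ∑ z ∈ C.image cl, (∑ y ∈ C with cl y = z, f y) ^ 2 := by
  rw [← Finset.sum_fiberwise_of_maps_to (fun x => Finset.mem_image_of_mem cl)]
  refine Finset.sum_congr rfl fun z _ => ?_
  rw [sq, Finset.sum_mul]
  exact Finset.sum_congr rfl fun x hx => by rw [(Finset.mem_filter.1 hx).2]

theorem sq_sum_le_card_image_mul (C : Finset V) (cl : V → Z) (f : V → ℝ) :
    (∑ x ∈ C, f x) ^ 2 ≤ (C.image cl).card * ∑ x ∈ C, f x * ∑ y ∈ C with cl y = cl x, f y := by
  rw [sum_mul_fiber_sum, ← Finset.sum_fiberwise_of_maps_to (fun x => Finset.mem_image_of_mem cl)]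
  exact sq_sum_le_card_mul_sum_sq

variable [Fintype V]

theorem partitionMatrix_mulVec_none (u : Option V → ℝ) :
    (partitionMatrix C cl a b c *ᵥ u) none = a * u none + b * ∑ x ∈ C, u (some x) := by
  simp [mulVec, dotProduct, partitionMatrix, Finset.mul_sum, Finset.sum_ite_mem]

theorem partitionMatrix_mulVec_some (u : Option V → ℝ) (x : V) :
    (partitionMatrix C cl a b c *ᵥ u) (some x) = if x ∈ C then
      b * u none + c * (∑ y ∈ C, u (some y) - ∑ y ∈ C with cl y = cl x, u (some y)) else 0 := by
  split_ifs with hx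
  · rw [← Finset.sum_filter_add_sum_filter_not C (fun y => cl y = cl x), add_sub_cancel_left]
    simp [mulVec, dotProduct, partitionMatrix, hx, Finset.mul_sum, ite_and, Finset.sum_ite_mem,
      Finset.sum_filter, eq_comm]
  · simp [mulVec, dotProduct, partitionMatrix, hx]

theorem dotProduct_partitionMatrix_mulVec (u : Option V → ℝ) :
    u ⬝ᵥ partitionMatrix C cl a b c *ᵥ u =
      a * u none ^ 2 + 2 * b * u none * ∑ x ∈ C, u (some x) + c * ((∑ x ∈ C, u (some x)) ^ 2 -
        ∑ x ∈ C, u (some x) * ∑ y ∈ C with cl y = cl x, u (some y)) := by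
  rw [dotProduct, Fintype.sum_option, partitionMatrix_mulVec_none]
  simp only [partitionMatrix_mulVec_some, mul_ite, mul_zero, Finset.sum_ite_mem,
    Finset.univ_inter, mul_add, mul_sub, Finset.sum_add_distrib, Finset.sum_sub_distrib,
    mul_left_comm _ c, ← Finset.mul_sum, ← Finset.sum_mul]
  ring

theorem mul_dotProduct_partitionMatrix_mulVec_le (ha : 0 ≤ a) (hc : 0 ≤ c)
    (hp : (a * c - b ^ 2) * (C.image cl).card ≤ a * c) (u : Option V → ℝ) :
    a * (u ⬝ᵥ partitionMatrix C cl a b c *ᵥ u) ≤ (a * u none + b * ∑ x ∈ C, u (some x)) ^ 2 := by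
  rw [dotProduct_partitionMatrix_mulVec]
  have hS := sq_sum_le_card_image_mul C cl fun x => u (some x)
  have hQ : 0 ≤ ∑ x ∈ C, u (some x) * ∑ y ∈ C with cl y = cl x, u (some y) := by
    rw [sum_mul_fiber_sum C cl fun x => u (some x)]
    exact Finset.sum_nonneg fun z _ => sq_nonneg _
  set S := ∑ x ∈ C, u (some x)
  set Q := ∑ x ∈ C, u (some x) * ∑ y ∈ C with cl y = cl x, u (some y)
  have key : (a * c - b ^ 2) * S ^ 2 ≤ a * c * Q := by
    rcases le_total 0 (a * c - b ^ 2) with h | h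
    · calc (a * c - b ^ 2) * S ^ 2 ≤ (a * c - b ^ 2) * ((C.image cl).card * Q) := by gcongr
        _ = (a * c - b ^ 2) * (C.image cl).card * Q := by ring
        _ ≤ a * c * Q := by gcongr
    · exact (mul_nonpos_of_nonpos_of_nonneg h (sq_nonneg S)).trans (by positivity)
  linarith

theorem isHyperbolicAt_partitionMatrix (ha : 0 < a) (hb : 0 ≤ b) (hc : 0 ≤ c)
    (hp : (a * c - b ^ 2) * (C.image cl).card ≤ a * c) {v : Option V → ℝ} (hv : ∀ y, 0 < v y) :
    IsHyperbolicAt (partitionMatrix C cl a b c) v := by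
  have hl : 0 < a * v none + b * ∑ x ∈ C, v (some x) :=
    add_pos_of_pos_of_nonneg (mul_pos ha (hv none))
      (mul_nonneg hb (Finset.sum_nonneg fun x _ => (hv _).le))
  refine .of_forall_exists_nonpos partitionMatrix_isSymm (dotProduct_mulVec_nonneg
    (partitionMatrix_nonneg ha.le hb hc) fun y => (hv y).le) fun u =>
      ⟨-(a * u none + b * ∑ x ∈ C, u (some x)) / (a * v none + b * ∑ x ∈ C, v (some x)), ?_⟩
  refine nonpos_of_mul_nonpos_right ((mul_dotProduct_partitionMatrix_mulVec_le ha.le hc hp _).trans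
    (pow_eq_zero_iff two_ne_zero |>.2 ?_).le) ha
  simp only [Pi.add_apply, Pi.smul_apply, smul_eq_mul, Finset.sum_add_distrib, ← Finset.mul_sum]
  field_simp
  ring

theorem card_image_eq_of_partitionMatrix_mulVec_eq_zero {N : ℝ} (ha : a = N * b)
    (hb : b = (N - 1) * c) (hb0 : b ≠ 0) (hc0 : c ≠ 0) {u : Option V → ℝ} (hu0 : u none ≠ 0)
    (hu : partitionMatrix C cl a b c *ᵥ u = 0) : (C.image cl).card = N := by
  have hsum : ∑ x ∈ C, u (some x) = -N * u none := by
    have hnone := congrFun hu none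
    rw [partitionMatrix_mulVec_none, ha, Pi.zero_apply] at hnone
    exact mul_left_cancel₀ hb0 (by linarith)
  have hfiber : ∀ z ∈ C.image cl, ∑ y ∈ C with cl y = z, u (some y) = -u none := by
    intro z hz
    obtain ⟨x, hx, rfl⟩ := Finset.mem_image.1 hz
    have hsome := congrFun hu (some x)
    rw [partitionMatrix_mulVec_some, if_pos hx, hsum, hb, Pi.zero_apply] at hsome
    exact mul_left_cancel₀ hc0 (by linarith)
  rw [← Finset.sum_fiberwise_of_maps_to (fun x => Finset.mem_image_of_mem cl),
    Finset.sum_congr rfl hfiber, Finset.sum_const, nsmul_eq_mul] at hsum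
  exact mul_right_cancel₀ hu0 (by linarith)

theorem factorial_mul_sub_sq_mul_le {p N : ℕ} (hp : p ≤ N) :
    ((N ! : ℝ) * (N - 2)! - ((N - 1)! : ℝ) ^ 2) * p ≤ N ! * (N - 2)! := by
  obtain hN | ⟨m, rfl⟩ : N ≤ 1 ∨ ∃ m, N = m + 2 := by
    rcases le_or_gt N 1 with h | h
    · exact .inl h
    · exact .inr ⟨N - 2, by omega⟩
  · interval_cases N <;> simp
  · have hp' : (p : ℝ) ≤ m + 2 := by exact_mod_cast hp
    simp only [Nat.add_sub_cancel, show m + 2 - 1 = m + 1 by omega, Nat.factorial_succ]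
    push_cast
    nlinarith [mul_le_mul_of_nonneg_left hp' (by positivity : 0 ≤ ((m : ℝ) + 1) * (m ! : ℝ) ^ 2)]

end PartitionMatrix

section IndependenceWeight

open Multiset
open scoped Nat

variable {V : Type*} {M : Matroid V} {s : Multiset (Option V)} {T : Set V} {x y : V}

theorem indep_insert_insert_iff_closure_ne (hx : x ∉ T) (hxT : M.Indep (insert x T))
    (hyT : M.Indep (insert y T)) :
    x ≠ y ∧ M.Indep (insert x (insert y T)) ↔
      M.closure (insert x T) ≠ M.closure (insert y T) := by
  have hxE : x ∈ M.E := hxT.subset_ground (T.mem_insert x)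
  refine ⟨fun ⟨hxy, hI⟩ hcl => ?_, fun hcl => ?_⟩
  · have hxyT : x ∉ insert y T := by simp [hxy, hx]
    have hmem : x ∈ M.closure (insert x T) := M.mem_closure_of_mem' (T.mem_insert x)
    rw [hcl] at hmem
    exact (hyT.notMem_closure_iff_of_notMem hxyT).2 hI hmem
  · have hxy : x ≠ y := fun h => hcl (by rw [h])
    refine ⟨hxy, by_contra fun hI => hcl (M.closure_insert_congr ⟨?_, ?_⟩)⟩
    · by_contra hmem
      exact hI ((hyT.notMem_closure_iff_of_notMem (by simp [hxy, hx])).1 hmem)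
    · exact ((hxT.subset (T.subset_insert x)).notMem_closure_iff_of_notMem hx).2 hxT

/-- Independence of a multiset in a matroid: its elements are distinct and form an independent
set. -/
def IsIndepMultiset (M : Matroid V) (t : Multiset V) : Prop :=
  t.Nodup ∧ M.Indep {x | x ∈ t}

theorem isIndepMultiset_cons {t : Multiset V} :
    IsIndepMultiset M (x ::ₘ t) ↔ t.Nodup ∧ x ∉ t ∧ M.Indep (insert x {y | y ∈ t}) := by
  have hset : {y | y ∈ x ::ₘ t} = insert x {y | y ∈ t} := Set.ext fun y => mem_cons
  rw [IsIndepMultiset, nodup_cons, hset]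
  tauto

theorem IsIndepMultiset.of_cons {t : Multiset V} (h : IsIndepMultiset M (x ::ₘ t)) :
    IsIndepMultiset M t :=
  ⟨(isIndepMultiset_cons.1 h).1, (isIndepMultiset_cons.1 h).2.2.subset (Set.subset_insert x _)⟩

theorem isIndepMultiset_cons_cons {t : Multiset V} (ht : t.Nodup) :
    IsIndepMultiset M (x ::ₘ y ::ₘ t) ↔
      (x ∉ t ∧ M.Indep (insert x {z | z ∈ t})) ∧ (y ∉ t ∧ M.Indep (insert y {z | z ∈ t})) ∧
        M.closure (insert x {z | z ∈ t}) ≠ M.closure (insert y {z | z ∈ t}) := by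
  have hset : {z | z ∈ y ::ₘ t} = insert y {z | z ∈ t} := Set.ext fun z => mem_cons
  rw [isIndepMultiset_cons, hset, nodup_cons, mem_cons, not_or]
  constructor
  · rintro ⟨⟨hy, -⟩, ⟨hxy, hx⟩, hI⟩
    have hyT := hI.subset (Set.subset_insert x _)
    have hxT : M.Indep (insert x {z | z ∈ t}) :=
      hI.subset (Set.insert_subset_insert (Set.subset_insert y _))
    exact ⟨⟨hx, hxT⟩, ⟨hy, hyT⟩,
      (indep_insert_insert_iff_closure_ne (T := {z | z ∈ t}) hx hxT hyT).1 ⟨hxy, hI⟩⟩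
  · rintro ⟨⟨hx, hxT⟩, ⟨hy, hyT⟩, hcl⟩
    obtain ⟨hxy, hI⟩ := (indep_insert_insert_iff_closure_ne (T := {z | z ∈ t}) hx hxT hyT).2 hcl
    exact ⟨⟨hy, ht⟩, ⟨hxy, hx⟩, hI⟩

/-- The direction in `Option V → ℝ` along which all variables except the homogenizing one grow at
unit speed. -/
def elementDirection (V : Type*) : Option V → ℝ :=
  fun y => y.elim 0 fun _ => 1

theorem elementDirection_nonneg (y : Option V) : 0 ≤ elementDirection V y := by
  cases y <;> simp [elementDirection]

theorem filterMap_id_map_some_add_replicate (t : Multiset V) (j : ℕ) :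
    (t.map some + replicate j none).filterMap id = t := by
  rw [filterMap_add, filterMap_map]
  induction j <;> simp_all [replicate_succ]

variable [Fintype V]

/-- The partial derivatives at the origin of the homogeneous polynomial
`∑ x₀ ^ (n - |I|) * ∏ i ∈ I, xᵢ`, where `I` ranges over the independent sets of `M` and `n` is the
size of the ground type. The homogenizing variable `x₀` has index `none`. Since a derivative
vanishes at the origin unless its order is `n`, the multiplicity of `none` in `s` is redundant, and
is replaced by the one that makes the order equal to `n`. -/
def indepWeight (M : Matroid V) (s : Multiset (Option V)) : ℝ :=
  if IsIndepMultiset M (s.filterMap id) then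
    ((Fintype.card V - card (s.filterMap id))! : ℝ) else 0

theorem indepWeight_pos_iff : 0 < indepWeight M s ↔ IsIndepMultiset M (s.filterMap id) := by
  unfold indepWeight
  split_ifs with h
  · exact iff_of_true (by positivity) h
  · exact iff_of_false (lt_irrefl 0) h

theorem indepWeight_cons_none : indepWeight M (none ::ₘ s) = indepWeight M s := by
  simp [indepWeight]

theorem isConeWeight_indepWeight (M : Matroid V) : IsConeWeight none (indepWeight M) where
  nonneg s := by unfold indepWeight; split_ifs <;> positivity
  cons_eq_zero y s hs := by
    cases y with
    | none => rwa [indepWeight_cons_none]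
    | some y =>
      refine if_neg fun h => ?_
      rw [filterMap_cons_some id _ s rfl] at h
      exact hs.not_gt (indepWeight_pos_iff.2 h.of_cons)
  cons_pos s hs := by rwa [indepWeight_cons_none]

/-- The elements outside `T` that can be added to `T` keeping it independent. -/
def continuations (M : Matroid V) (T : Set V) : Finset V :=
  {x | x ∉ T ∧ M.Indep (insert x T)}

theorem mem_continuations : x ∈ continuations M T ↔ x ∉ T ∧ M.Indep (insert x T) := by
  simp [continuations]

theorem continuations_subset (t : Multiset V) :
    continuations M {x | x ∈ t} ⊆ t.toFinsetᶜ := fun x hx => by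
  rw [Finset.mem_compl, mem_toFinset]
  exact (mem_continuations.1 hx).1

theorem card_compl_toFinset {t : Multiset V} (ht : t.Nodup) :
    t.toFinsetᶜ.card = Fintype.card V - card t := by
  rw [Finset.card_compl, toFinset_card_of_nodup ht]

theorem hessian_indepWeight (hs : IsIndepMultiset M (s.filterMap id)) :
    hessian (indepWeight M) s =
      partitionMatrix (continuations M {x | x ∈ s.filterMap id})
        (fun x => M.closure (insert x {x | x ∈ s.filterMap id}))
        (Fintype.card V - card (s.filterMap id))! (Fintype.card V - card (s.filterMap id) - 1)!
        (Fintype.card V - card (s.filterMap id) - 2)! := by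
  ext i j
  cases i <;> cases j <;>
    simp [hessian, partitionMatrix, indepWeight, continuations, isIndepMultiset_cons_cons hs.1,
      isIndepMultiset_cons, hs, hs.1, Nat.sub_sub, and_assoc]

theorem isHyperbolicAt_hessian_indepWeight {v : Option V → ℝ} (hv : ∀ y, 0 < v y)
    (s : Multiset (Option V)) : IsHyperbolicAt (hessian (indepWeight M) s) v := by
  by_cases hs : IsIndepMultiset M (s.filterMap id)
  · rw [hessian_indepWeight hs]
    refine isHyperbolicAt_partitionMatrix (by positivity) (by positivity) (by positivity)
      (factorial_mul_sub_sq_mul_le ?_) hv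
    rw [← card_compl_toFinset hs.1]
    exact Finset.card_image_le.trans (Finset.card_le_card (continuations_subset _))
  · have h0 := (isConeWeight_indepWeight M).hessian_iterate_dirDeriv_eq_zero v 0 (if_neg hs)
    rw [Function.iterate_zero, id_eq] at h0
    intro u
    simp [h0]

theorem indep_insert_insert_of_hessian_mulVec_eq_zero (hs : IsIndepMultiset M (s.filterMap id))
    (hcard : card (s.filterMap id) + 2 ≤ Fintype.card V) {u : Option V → ℝ} (hu0 : u none ≠ 0)
    (hu : Matrix.mulVec (hessian (indepWeight M) s) u = 0) (hx : x ∉ s.filterMap id)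
    (hy : y ∉ s.filterMap id) (hxy : x ≠ y) :
    M.Indep (insert x (insert y {z | z ∈ s.filterMap id})) := by
  set t := s.filterMap id
  set T : Set V := {z | z ∈ t}
  obtain ⟨m, hm⟩ : ∃ m, Fintype.card V - card t = m + 2 := ⟨Fintype.card V - card t - 2, by omega⟩
  rw [hessian_indepWeight hs, hm] at hu
  have himage : ((continuations M T).image fun x => M.closure (insert x T)).card = m + 2 := by
    exact_mod_cast card_image_eq_of_partitionMatrix_mulVec_eq_zero (N := (m + 2 : ℝ))
      (by simp only [Nat.add_one_sub_one, Nat.factorial_succ]; push_cast; ring)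
      (by simp only [Nat.add_one_sub_one, Nat.add_sub_cancel, Nat.factorial_succ]; push_cast; ring)
      (by positivity) (by positivity) hu0 hu
  have hcompl : continuations M T = t.toFinsetᶜ := by
    refine Finset.eq_of_subset_of_card_le (continuations_subset t) ?_
    rw [card_compl_toFinset hs.1, hm, ← himage]
    exact Finset.card_image_le
  have hinj : Set.InjOn (fun x => M.closure (insert x T)) (continuations M T) := by
    rw [← Finset.card_image_iff, himage, hcompl, card_compl_toFinset hs.1, hm]
  have hmem : ∀ z ∉ t, z ∈ continuations M T := fun z hz => by simpa [hcompl] using hz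
  have hxT := mem_continuations.1 (hmem x hx)
  have hyT := mem_continuations.1 (hmem y hy)
  exact ((indep_insert_insert_iff_closure_ne hxT.1 hxT.2 hyT.2).2
    (hinj.ne (hmem x hx) (hmem y hy) hxy)).2


section Counting

theorem dirDeriv_elementDirection (f : Multiset (Option V) → ℝ) (s : Multiset (Option V)) :
    dirDeriv (elementDirection V) f s = ∑ x, f (some x ::ₘ s) := by
  simp [dirDeriv, elementDirection, Fintype.sum_option]

theorem sum_powersetCard_sum_compl {f : Finset V → ℝ} (m : ℕ) :
    ∑ x, ∑ S ∈ Finset.powersetCard m Finset.univ with x ∉ S, f (insert x S) =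
      (m + 1) * ∑ S ∈ Finset.powersetCard (m + 1) Finset.univ, f S := by
  have hcard : ∀ S ∈ Finset.powersetCard (m + 1) (Finset.univ : Finset V),
      ∑ _x ∈ S, f S = (m + 1) * f S := fun S hS => by
    rw [Finset.sum_const, nsmul_eq_mul, (Finset.mem_powersetCard.1 hS).2]
    push_cast
    rfl
  rw [Finset.mul_sum, ← Finset.sum_congr rfl hcard, Finset.sum_sigma', Finset.sum_sigma']
  refine Finset.sum_bij' (fun p _ => ⟨insert p.1 p.2, p.1⟩) (fun p _ => ⟨p.2, p.1.erase p.2⟩)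
    ?_ ?_ ?_ ?_ ?_
  · rintro ⟨x, S⟩ h
    simp_all
  · rintro ⟨S, x⟩ h
    simp_all
  · rintro ⟨x, S⟩ h
    simp_all
  · rintro ⟨S, x⟩ h
    simp_all
  · simp

theorem iterate_dirDeriv_elementDirection {f : Multiset (Option V) → ℝ}
    (hf : ∀ x s, some x ∈ s → f (some x ::ₘ s) = 0) (m : ℕ) (s : Multiset (Option V)) :
    (dirDeriv (elementDirection V))^[m] f s =
      m ! * ∑ S ∈ Finset.powersetCard m (Finset.univ : Finset V), f (S.val.map some + s) := by
  induction m generalizing s with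
  | zero => simp
  | succ m ih =>
    rw [Function.iterate_succ_apply', dirDeriv_elementDirection]
    have hx : ∀ x, (dirDeriv (elementDirection V))^[m] f (some x ::ₘ s) =
        m ! * ∑ S ∈ Finset.powersetCard m Finset.univ with x ∉ S,
          f ((insert x S).val.map some + s) := by
      intro x
      rw [ih, Finset.sum_filter]
      congr 1
      refine Finset.sum_congr rfl fun S _ => ?_
      split_ifs with hxS
      · rw [add_cons]
        exact hf x _ (mem_add.2 (.inl (mem_map_of_mem some hxS)))
      · rw [Finset.insert_val_of_notMem hxS, map_cons, cons_add, add_cons]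
    rw [Finset.sum_congr rfl fun x _ => hx x, ← Finset.mul_sum,
      sum_powersetCard_sum_compl (f := fun S => f (S.val.map some + s)), Nat.factorial_succ]
    push_cast
    ring

theorem indepWeight_eq_zero_of_mem (hx : some x ∈ s) : indepWeight M (some x ::ₘ s) = 0 := by
  refine if_neg fun h => ?_
  rw [filterMap_cons_some id _ s rfl, isIndepMultiset_cons] at h
  exact h.2.1 ((mem_filterMap _ _).2 ⟨some x, hx, rfl⟩)

theorem isHyperbolicAt_hessian_iterate_dirDeriv_indepWeight (M : Matroid V) (m : ℕ)
    (s : Multiset (Option V)) :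
    IsHyperbolicAt (hessian ((dirDeriv (elementDirection V))^[m] (indepWeight M)) s)
      (elementDirection V) :=
  (isConeWeight_indepWeight M).isHyperbolicAt_hessian_iterate_dirDeriv
    (fun _ hv s => isHyperbolicAt_hessian_indepWeight hv s) elementDirection_nonneg m s

theorem iterate_dirDeriv_indepWeight_nonneg (M : Matroid V) (m : ℕ) (s : Multiset (Option V)) :
    0 ≤ (dirDeriv (elementDirection V))^[m] (indepWeight M) s := by
  rw [iterate_dirDeriv_elementDirection fun x s => indepWeight_eq_zero_of_mem]
  exact mul_nonneg (by positivity)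
    (Finset.sum_nonneg fun S _ => (isConeWeight_indepWeight M).nonneg _)

theorem iterate_dirDeriv_indepWeight_pos {R : Finset V} (hR : M.Indep R) {m : ℕ}
    (hs : 0 < indepWeight M s) (hm : card s + m ≤ R.card) :
    0 < (dirDeriv (elementDirection V))^[m] (indepWeight M) s := by
  induction m generalizing s with
  | zero => exact hs
  | succ m ih =>
    have ht := indepWeight_pos_iff.1 hs
    set t := s.filterMap id with htdef
    have hle : card t ≤ card s := by
      rw [htdef]
      induction s using Quot.inductionOn
      exact List.length_filterMap_le _ _
    obtain ⟨x, ⟨-, hxt⟩, hxI⟩ := ht.2.exists_insert_of_encard_lt hR (by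
      have htoFinset : {x | x ∈ t} = (t.toFinset : Set V) := by ext; simp
      rw [htoFinset, Set.encard_coe_eq_coe_finsetCard, Set.encard_coe_eq_coe_finsetCard,
        toFinset_card_of_nodup ht.1]
      exact_mod_cast (by omega : card t < R.card))
    have hxs : 0 < indepWeight M (some x ::ₘ s) := by
      rw [indepWeight_pos_iff, filterMap_cons_some id _ s rfl]
      exact isIndepMultiset_cons.2 ⟨ht.1, hxt, hxI⟩
    rw [Function.iterate_succ_apply', dirDeriv_elementDirection]
    exact Finset.sum_pos' (fun y _ => iterate_dirDeriv_indepWeight_nonneg M m _)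
      ⟨x, Finset.mem_univ x, ih hxs (by rw [card_cons]; omega)⟩

theorem indepWeight_map_some_add_replicate (S : Finset V) (j : ℕ) :
    indepWeight M (S.val.map some + replicate j none) =
      if M.Indep S then ((Fintype.card V - S.card)! : ℝ) else 0 := by
  rw [indepWeight, filterMap_id_map_some_add_replicate, Finset.card_val]
  exact if_congr (and_iff_right S.nodup) rfl rfl

/-- The number of independent `m`-sets of `M`, normalized to equal `(Fintype.card V)!` when all
`m`-sets are independent. -/
def scaledNumIndep (M : Matroid V) (m : ℕ) : ℝ :=
  m ! * (Fintype.card V - m)! * numIndep (fun S : Finset V => M.Indep S) m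

theorem iterate_dirDeriv_indepWeight_replicate (M : Matroid V) (m j : ℕ) :
    (dirDeriv (elementDirection V))^[m] (indepWeight M) (replicate j none) =
      scaledNumIndep M m := by
  have hsum : ∑ S ∈ Finset.powersetCard m (Finset.univ : Finset V),
      indepWeight M (S.val.map some + replicate j none) =
        ∑ _S ∈ Finset.univ.filter fun S : Finset V => M.Indep S ∧ S.card = m,
          ((Fintype.card V - m)! : ℝ) := by
    rw [← Finset.univ_filter_card_eq, Finset.sum_filter, Finset.sum_filter]
    refine Finset.sum_congr rfl fun S _ => ?_
    rw [indepWeight_map_some_add_replicate]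
    by_cases hS : S.card = m <;> simp [hS]
  rw [iterate_dirDeriv_elementDirection fun x s => indepWeight_eq_zero_of_mem, hsum,
    Finset.sum_const, nsmul_eq_mul, scaledNumIndep, numIndep]
  ring

theorem exists_hessian_mulVec_eq_zero_of_sq_eq {K : ℕ} (hpos : 0 < scaledNumIndep M (K + 2))
    (heq : scaledNumIndep M (K + 1) ^ 2 = scaledNumIndep M K * scaledNumIndep M (K + 2)) :
    ∃ u : Option V → ℝ, u none ≠ 0 ∧
      Matrix.mulVec (hessian ((dirDeriv (elementDirection V))^[K] (indepWeight M)) 0) u = 0 := by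
  set v := elementDirection V
  set f := (dirDeriv v)^[K] (indepWeight M)
  set z : Option V → ℝ := Pi.single none 1
  have hdz : ∀ g s, dirDeriv z g s = g (none ::ₘ s) := fun g s => by
    simp [dirDeriv, z, Pi.single_apply]
  have hzz : dirDeriv z (dirDeriv z f) 0 = scaledNumIndep M K := by
    rw [hdz, hdz]
    exact iterate_dirDeriv_indepWeight_replicate M K 2
  have hzv : dirDeriv z (dirDeriv v f) 0 = scaledNumIndep M (K + 1) := by
    rw [hdz, ← Function.iterate_succ_apply' (dirDeriv v)]
    exact iterate_dirDeriv_indepWeight_replicate M (K + 1) 1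
  have hvv : dirDeriv v (dirDeriv v f) 0 = scaledNumIndep M (K + 2) := by
    rw [← Function.iterate_succ_apply' (dirDeriv v), ← Function.iterate_succ_apply' (dirDeriv v)]
    exact iterate_dirDeriv_indepWeight_replicate M (K + 2) 0
  have hyp : IsHyperbolicAt (hessian f 0) v :=
    isHyperbolicAt_hessian_iterate_dirDeriv_indepWeight M K 0
  simp only [← dotProduct_hessian_mulVec] at hzz hzv hvv
  refine ⟨_, ?_, hyp.mulVec_eq_zero_of_sq_eq (hessian_isSymm f 0) (z := z) ?_ ?_⟩
  · simp [z, v, elementDirection]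
  · rwa [hvv]
  · rwa [hzz, hzv, hvv]

theorem scaledNumIndep_pos {R : Finset V} (hR : M.Indep R) {m : ℕ} (hm : m ≤ R.card) :
    0 < scaledNumIndep M m := by
  rw [← iterate_dirDeriv_indepWeight_replicate M m 0]
  refine iterate_dirDeriv_indepWeight_pos hR (indepWeight_pos_iff.2 ?_) (by simpa using hm)
  simp [IsIndepMultiset]

theorem indep_insert_insert_of_scaledNumIndep_sq_eq {K : ℕ} {R : Finset V} (hR : M.Indep R)
    (hK : K + 2 ≤ R.card)
    (heq : scaledNumIndep M (K + 1) ^ 2 = scaledNumIndep M K * scaledNumIndep M (K + 2))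
    {T : Finset V} (hT : M.Indep T) (hTK : T.card = K) (hx : x ∉ T) (hy : y ∉ T) (hxy : x ≠ y) :
    M.Indep (insert x (insert y T) : Finset V) := by
  obtain ⟨u, hu0, hu⟩ := exists_hessian_mulVec_eq_zero_of_sq_eq (scaledNumIndep_pos hR hK) heq
  have hfilter : (T.val.map some).filterMap id = T.val := by
    simpa using filterMap_id_map_some_add_replicate T.val 0
  have hcard : card (T.val.map some) = K := by rw [card_map, Finset.card_val, hTK]
  have hdesc : Matrix.mulVec (hessian (indepWeight M) (T.val.map some)) u = 0 := by
    refine (isConeWeight_indepWeight M).hessian_mulVec_eq_zero_of_iterate_dirDeriv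
      elementDirection_nonneg (isHyperbolicAt_hessian_iterate_dirDeriv_indepWeight M)
      (fun m s hs hm => iterate_dirDeriv_indepWeight_pos hR hs hm) ?_ (m := 0) ?_ ?_
    · simp [elementDirection]
    · rw [hcard]
      exact hK
    · rwa [hcard]
  have := indep_insert_insert_of_hessian_mulVec_eq_zero (x := x) (y := y)
    (by rw [hfilter]; exact ⟨T.nodup, hT⟩)
    (by rw [hfilter, Finset.card_val, hTK]; exact hK.trans R.card_le_univ) hu0 hdesc
    (by rwa [hfilter]) (by rwa [hfilter]) hxy
  simpa [hfilter] using this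

end Counting

end IndependenceWeight

section LogConcavity

open scoped Nat

section Exchange

variable {V : Type*} {M : Matroid V}

theorem exists_matroid_indep_eq [DecidableEq V] {Indep : Finset V → Prop} (h_ne : ∃ S, Indep S)
    (h_hered : ∀ S T, S ⊆ T → Indep T → Indep S)
    (h_exch : ∀ S T, Indep S → Indep T → S.card < T.card → ∃ x ∈ T, x ∉ S ∧ Indep (insert x S)) :
    ∃ M : Matroid V, Indep = fun S : Finset V => M.Indep S := by
  obtain ⟨S, hS⟩ := h_ne
  refine ⟨(IndepMatroid.ofFinset Set.univ Indep (h_hered ∅ S S.empty_subset hS)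
    (fun I J hJ hIJ => h_hered I J hIJ hJ) h_exch fun _ _ => Set.subset_univ _).matroid, ?_⟩
  ext I
  simp

theorem indep_of_forall_indep_insert_insert [Finite V] {K : ℕ} {R S : Finset V} (hR : M.Indep R)
    (hRK : K ≤ R.card)
    (hext : ∀ T : Finset V, M.Indep T → T.card = K → ∀ x ∉ T, ∀ y ∉ T, x ≠ y →
      M.Indep (insert x (insert y T) : Finset V))
    (hS : S.card = K + 2) : M.Indep S := by
  obtain ⟨T₀, hT₀R, hT₀K⟩ := Finset.exists_subset_card_eq hRK
  obtain ⟨T, ⟨hT, hTK⟩, hmax⟩ :=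
    Set.exists_max_image {T : Finset V | M.Indep T ∧ T.card = K} (fun T => (T ∩ S).card)
      (Set.toFinite _) ⟨T₀, hR.subset (Finset.coe_subset.2 hT₀R), hT₀K⟩
  have hcard : 1 < (S \ T).card := by
    have := Finset.le_card_sdiff T S
    omega
  obtain ⟨x, hx, y, hy, hxy⟩ := Finset.one_lt_card.1 hcard
  rw [Finset.mem_sdiff] at hx hy
  have hxyT := hext T hT hTK x hx.2 y hy.2 hxy
  by_cases hTS : T ⊆ S
  · rwa [← Finset.eq_of_subset_of_card_le
      (Finset.insert_subset hx.1 (Finset.insert_subset hy.1 hTS)) ?_]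
    rw [Finset.card_insert_of_notMem (by simp [hx.2, hxy]), Finset.card_insert_of_notMem hy.2]
    omega
  · obtain ⟨t, htT, htS⟩ := Finset.not_subset.1 hTS
    have hxt : x ∉ T.erase t := fun h => hx.2 (Finset.mem_of_mem_erase h)
    have hswap := hmax (insert x (T.erase t)) ⟨hxyT.subset ?_, ?_⟩
    · rw [Finset.insert_inter_of_mem hx.1, Finset.erase_inter,
        Finset.erase_eq_of_notMem (by simp [htS]),
        Finset.card_insert_of_notMem (by simp [hx.2])] at hswap
      omega
    · rw [Finset.coe_subset]
      exact Finset.insert_subset_insert x ((T.erase_subset t).trans (Finset.subset_insert y T))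
    · rw [Finset.card_insert_of_notMem hxt, Finset.card_erase_add_one htT, hTK]

end Exchange

variable {V : Type*} [Fintype V] {M : Matroid V}

theorem scaledNumIndep_eq_factorial {k m : ℕ} (hk : k ≤ Fintype.card V)
    (hI : ∀ S : Finset V, S.card = k → M.Indep S) (hm : m ≤ k) :
    scaledNumIndep M m = (Fintype.card V)! := by
  have hall : Finset.univ.filter (fun S : Finset V => M.Indep S ∧ S.card = m) =
      Finset.powersetCard m Finset.univ := by
    rw [← Finset.univ_filter_card_eq]
    refine Finset.filter_congr fun S _ => and_iff_right_of_imp fun hS => ?_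
    obtain ⟨T, hST, hT⟩ := Finset.exists_superset_card_eq (hS.trans_le hm) hk
    exact (hI T hT).subset hST
  rw [scaledNumIndep, numIndep, hall, Finset.card_powersetCard, Finset.card_univ, mul_comm,
    ← mul_assoc]
  exact_mod_cast Nat.choose_mul_factorial_mul_factorial (hm.trans hk)

theorem sq_numIndep_eq_iff {k : ℕ} (hk : 1 ≤ k) (hkn : k < Fintype.card V) :
    (numIndep (fun S : Finset V => M.Indep S) k : ℝ) ^ 2 =
        (1 + 1 / (k : ℝ)) * (1 + 1 / ((Fintype.card V : ℝ) - k)) *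
          numIndep (fun S : Finset V => M.Indep S) (k - 1) *
          numIndep (fun S : Finset V => M.Indep S) (k + 1) ↔
      scaledNumIndep M k ^ 2 = scaledNumIndep M (k - 1) * scaledNumIndep M (k + 1) := by
  obtain ⟨p, rfl⟩ := Nat.exists_eq_add_of_le' hk
  obtain ⟨d, hd⟩ := Nat.exists_eq_add_of_lt hkn
  have hsub : Fintype.card V - p = d + 2 ∧ Fintype.card V - (p + 1) = d + 1 ∧
      Fintype.card V - (p + 1 + 1) = d := by omega
  simp only [scaledNumIndep, Nat.add_sub_cancel, hsub, Nat.factorial_succ]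
  rw [hd]
  push_cast
  rw [show (p + 1 + d + 1 - (p + 1) : ℝ) = d + 1 by ring]
  field_simp

theorem lt_matroidRk_iff {Indep : Finset V → Prop} {k : ℕ} :
    k < matroidRk Indep ↔ ∃ S, Indep S ∧ k < S.card := by
  simp only [matroidRk, Finset.lt_sup_iff, Finset.mem_univ, true_and]
  refine exists_congr fun S => ?_
  split_ifs with hS <;> simp [hS]

theorem scaledNumIndep_sq_eq_iff {k : ℕ} (hk : 1 ≤ k) {R : Finset V} (hR : M.Indep R)
    (hkR : k < R.card) :
    scaledNumIndep M k ^ 2 = scaledNumIndep M (k - 1) * scaledNumIndep M (k + 1) ↔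
      ∀ S : Finset V, S.card = k + 1 → M.Indep S := by
  have hkn : k + 1 ≤ Fintype.card V := Nat.succ_le_of_lt (hkR.trans_le R.card_le_univ)
  refine ⟨fun heq S hS => ?_, fun hall => ?_⟩
  · obtain ⟨K, rfl⟩ := Nat.exists_eq_add_of_le' hk
    exact indep_of_forall_indep_insert_insert hR (by omega)
      (fun T hT hTK x hx y hy hxy => indep_insert_insert_of_scaledNumIndep_sq_eq hR
        (Nat.succ_le_of_lt hkR) heq hT hTK hx hy hxy) hS
  · rw [scaledNumIndep_eq_factorial hkn hall k.le_succ, scaledNumIndep_eq_factorial hkn hall le_rfl,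
      scaledNumIndep_eq_factorial hkn hall (by omega), sq]

end LogConcavity

/-- **Equality conditions for log-concavity of matroids.** Equality holds in the
ultra-log-concavity inequality if and only if every `(k+1)`-subset of the ground set is
independent (i.e. `girth(M) > k+1`). -/
theorem matroid_equality
    (Indep : Finset X → Prop)
    (h_ne : ∃ S : Finset X, Indep S)
    (h_hered : ∀ S T : Finset X, S ⊆ T → Indep T → Indep S)
    (h_exch : ∀ S T : Finset X, Indep S → Indep T → S.card < T.card →
      ∃ x ∈ T, x ∉ S ∧ Indep (insert x S))
    (k : ℕ) (hk1 : 1 ≤ k) (hk2 : k < matroidRk Indep) :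
    (numIndep Indep k : ℝ) ^ 2 =
        ((1 : ℝ) + 1 / (k : ℝ)) * (1 + 1 / ((Fintype.card X : ℝ) - (k : ℝ))) *
          (numIndep Indep (k - 1) : ℝ) * (numIndep Indep (k + 1) : ℝ) ↔
      ∀ S : Finset X, S.card = k + 1 → Indep S := by
  obtain ⟨M, rfl⟩ := exists_matroid_indep_eq h_ne h_hered h_exch
  obtain ⟨R, hR, hkR⟩ := lt_matroidRk_iff.1 hk2
  rw [sq_numIndep_eq_iff hk1 (hkR.trans_le R.card_le_univ)]
  exact scaledNumIndep_sq_eq_iff hk1 hR hkR
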